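/- arXiv:2402.17886 — 2 statements merged into one kernel-verified Lean document; each statement's English description precedes it below -/
import Mathlib

section
/- (Monotonicity of the expected posterior variance, used in the proof of Proposition 3.1.) For all 0 < s ≤ t, E_{x ∼ p_s}[Tr Σ_s(x)] ≤ E_{x ∼ p_t}[Tr Σ_t(x)], and for every t > 0, E_{x ∼ p_t}[Tr Σ_t(x)] ≤ Tr Cov(p), where Tr Cov(p) = E_{x∼p}[‖x − E_p[x]‖²]. -/
open MeasureTheory Real
open scoped ENNReal RealInnerProductSpace

noncomputable section

/-- `ℝ^d` as a Euclidean space. -/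
abbrev Euc (d : ℕ) := EuclideanSpace ℝ (Fin d)

/-- The standard Gaussian measure `γ^d` on `ℝ^d`. -/
def stdGaussian (d : ℕ) : Measure (Euc d) :=
  volume.withDensity fun x => ENNReal.ofReal ((2 * π) ^ (-(d : ℝ) / 2) * exp (-‖x‖ ^ 2 / 2))

/-- The unnormalized measure with density `exp (-V)` with respect to Lebesgue measure. -/
def gibbs (d : ℕ) (V : Euc d → ℝ) : Measure (Euc d) :=
  volume.withDensity fun x => ENNReal.ofReal (exp (-V x))

/-- The time-`t` marginal `p_t` of the OU process `dX_t = -X_t dt + √2 dB_t` started at `p`,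
i.e. the law of `e^{-t} X_0 + √(1-e^{-2t}) Z` with `X_0 ∼ p`, `Z ∼ γ^d` independent. -/
def ouMarginal (d : ℕ) (p : Measure (Euc d)) (t : ℝ) : Measure (Euc d) :=
  (p.prod (stdGaussian d)).map fun xz =>
    exp (-t) • xz.1 + Real.sqrt (1 - exp (-2 * t)) • xz.2

/-- The (smooth, positive) density of `p_t`. -/
def ouDensity (d : ℕ) (p : Measure (Euc d)) (t : ℝ) (x : Euc d) : ℝ :=
  (2 * π * (1 - exp (-2 * t))) ^ (-(d : ℝ) / 2) *
    ∫ z, exp (-‖x - exp (-t) • z‖ ^ 2 / (2 * (1 - exp (-2 * t)))) ∂p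

/-- The score `∇ ln p_t`. -/
def score (d : ℕ) (p : Measure (Euc d)) (t : ℝ) (x : Euc d) : Euc d :=
  gradient (fun y => Real.log (ouDensity d p t y)) x

/-- The conditional law `p_{0|t}(·|x)` of `X_0` given `X_t = x`, with density (w.r.t. `p`)
proportional to `z ↦ exp (-‖x - e^{-t} z‖² / (2 (1 - e^{-2t})))`. -/
def posterior (d : ℕ) (p : Measure (Euc d)) (t : ℝ) (x : Euc d) : Measure (Euc d) :=
  ((p.withDensity fun z =>
      ENNReal.ofReal (exp (-‖x - exp (-t) • z‖ ^ 2 / (2 * (1 - exp (-2 * t)))))) Set.univ)⁻¹ •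
    (p.withDensity fun z =>
      ENNReal.ofReal (exp (-‖x - exp (-t) • z‖ ^ 2 / (2 * (1 - exp (-2 * t))))))

/-- Kullback–Leibler divergence `KL(μ ‖ ν) = ∫ log (dμ/dν) dμ`. -/
def KLdiv {α : Type*} [MeasurableSpace α] (μ ν : Measure α) : ℝ :=
  ∫ x, Real.log ((μ.rnDeriv ν x).toReal) ∂μ

/-- Mean of the posterior `p_{0|t}(·|x)`. -/
def postMean (d : ℕ) (p : Measure (Euc d)) (t : ℝ) (x : Euc d) : Euc d :=
  ∫ z, z ∂(posterior d p t x)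

/-- Trace of the covariance matrix of the posterior `p_{0|t}(·|x)`. -/
def postTrCov (d : ℕ) (p : Measure (Euc d)) (t : ℝ) (x : Euc d) : ℝ :=
  ∫ z, ‖z - postMean d p t x‖ ^ 2 ∂(posterior d p t x)

/-- Likelihood weight. -/
def wt (d : ℕ) (t : ℝ) (x z : Euc d) : ℝ≥0∞ :=
  ENNReal.ofReal (exp (-‖x - exp (-t) • z‖ ^ 2 / (2 * (1 - exp (-2 * t)))))

/-- Normalization. -/
def nz (d : ℕ) (p : Measure (Euc d)) (t : ℝ) (x : Euc d) : ℝ≥0∞ := ∫⁻ z, wt d t x z ∂p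

lemma wt_meas (d : ℕ) (t : ℝ) : Measurable (fun q : Euc d × Euc d => wt d t q.1 q.2) := by
  unfold wt; fun_prop

lemma wt_meas_right (d : ℕ) (t : ℝ) (x : Euc d) : Measurable (fun z => wt d t x z) := by
  unfold wt; fun_prop

lemma wt_pos (d : ℕ) (t : ℝ) (x z : Euc d) : wt d t x z ≠ 0 := by
  simp [wt, exp_pos]

lemma one_sub_pos {t : ℝ} (ht : 0 < t) : 0 < 1 - exp (-2 * t) := by
  have : exp (-2 * t) < 1 := by rw [exp_lt_one_iff]; linarith
  linarith

lemma wt_le_one (d : ℕ) {t : ℝ} (ht : 0 < t) (x z : Euc d) : wt d t x z ≤ 1 := by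
  unfold wt
  rw [ENNReal.ofReal_le_one, exp_le_one_iff]
  have := one_sub_pos ht
  apply div_nonpos_of_nonpos_of_nonneg
  · nlinarith [sq_nonneg ‖x - exp (-t) • z‖]
  · positivity

lemma nz_meas (d : ℕ) (p : Measure (Euc d)) [IsProbabilityMeasure p] (t : ℝ) :
    Measurable (nz d p t) := (wt_meas d t).lintegral_prod_right'

lemma nz_ne_zero (d : ℕ) (p : Measure (Euc d)) [IsProbabilityMeasure p] (t : ℝ) (x : Euc d) :
    nz d p t x ≠ 0 := by
  unfold nz
  rw [Ne, lintegral_eq_zero_iff (wt_meas_right d t x)]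
  intro h
  have h2 : ∀ᵐ z ∂p, False := by
    filter_upwards [h] with z hz
    exact wt_pos d t x z hz
  simp at h2
  exact IsProbabilityMeasure.ne_zero p h2

lemma nz_le_one (d : ℕ) (p : Measure (Euc d)) [IsProbabilityMeasure p] {t : ℝ} (ht : 0 < t)
    (x : Euc d) : nz d p t x ≤ 1 := by
  calc nz d p t x ≤ ∫⁻ _, 1 ∂p := lintegral_mono (fun z => wt_le_one d ht x z)
    _ = 1 := by simp

lemma posterior_eq (d : ℕ) (p : Measure (Euc d)) (t : ℝ) (x : Euc d) :
    posterior d p t x = (nz d p t x)⁻¹ • p.withDensity (wt d t x) := by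
  unfold posterior nz
  rw [withDensity_apply _ MeasurableSet.univ, Measure.restrict_univ]
  rfl

lemma lintegral_posterior (d : ℕ) (p : Measure (Euc d)) (t : ℝ) (x : Euc d)
    {f : Euc d → ℝ≥0∞} (hf : Measurable f) :
    ∫⁻ z, f z ∂(posterior d p t x) = (nz d p t x)⁻¹ * ∫⁻ z, wt d t x z * f z ∂p := by
  rw [posterior_eq, lintegral_smul_measure,
    lintegral_withDensity_eq_lintegral_mul _ (wt_meas_right d t x) hf]
  rfl

lemma posterior_prob (d : ℕ) (p : Measure (Euc d)) [IsProbabilityMeasure p] {t : ℝ} (ht : 0 < t)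
    (x : Euc d) : IsProbabilityMeasure (posterior d p t x) := by
  constructor
  have := lintegral_posterior d p t x (f := fun _ => 1) measurable_const
  simp only [lintegral_one, mul_one] at this
  rw [this]
  exact ENNReal.inv_mul_cancel (nz_ne_zero d p t x)
    (ne_top_of_le_ne_top ENNReal.one_ne_top (nz_le_one d p ht x))

lemma postMean_meas (d : ℕ) (p : Measure (Euc d)) [IsProbabilityMeasure p] {t : ℝ} (ht : 0 < t) :
    Measurable (postMean d p t) := by
  have : postMean d p t = fun x => (nz d p t x)⁻¹.toReal • ∫ z, (wt d t x z).toReal • z ∂p := by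
    funext x
    unfold postMean
    rw [posterior_eq, integral_smul_measure,
      integral_withDensity_eq_integral_toReal_smul (wt_meas_right d t x)]
    exact Filter.Eventually.of_forall
      fun z => (wt_le_one d ht x z).trans_lt ENNReal.one_lt_top
  rw [this]
  apply Measurable.fun_smul
  · exact (nz_meas d p t).inv.ennreal_toReal
  · have h : StronglyMeasurable (fun q : Euc d × Euc d => (wt d t q.1 q.2).toReal • q.2) :=
      ((wt_meas d t).ennreal_toReal.smul measurable_snd).stronglyMeasurable
    exact h.integral_prod_right'.measurable

lemma lintegral_posterior_meas (d : ℕ) (p : Measure (Euc d)) [IsProbabilityMeasure p] (t : ℝ)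
    {f : Euc d × Euc d → ℝ≥0∞} (hf : Measurable f) :
    Measurable fun x => ∫⁻ z, f (z, x) ∂(posterior d p t x) := by
  have : (fun x => ∫⁻ z, f (z, x) ∂(posterior d p t x)) =
      fun x => (nz d p t x)⁻¹ * ∫⁻ z, wt d t x z * f (z, x) ∂p := by
    funext x
    exact lintegral_posterior d p t x (by fun_prop)
  rw [this]
  apply (nz_meas d p t).inv.mul
  have h : Measurable (fun q : Euc d × Euc d => wt d t q.1 q.2 * f (q.2, q.1)) :=
    (wt_meas d t).mul (by fun_prop)
  exact h.lintegral_prod_right'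

/-- Gaussian constant. -/
def gc (d : ℕ) : ℝ≥0∞ := ENNReal.ofReal ((2 * π) ^ (-(d : ℝ) / 2))

lemma gauss_prob (d : ℕ) : IsProbabilityMeasure (stdGaussian d) := by
  constructor
  unfold stdGaussian
  rw [withDensity_apply _ MeasurableSet.univ, Measure.restrict_univ]
  have h := GaussianFourier.integral_rexp_neg_mul_sq_norm (V := Euc d) (b := 1 / 2) (by norm_num)
  have hpos : (0:ℝ) < (2 * π) ^ ((d : ℝ) / 2) := by positivity
  have h' : ∫ v : Euc d, exp (-‖v‖ ^ 2 / 2) = (2 * π) ^ ((d : ℝ) / 2) := by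
    convert h using 3
    · ring_nf
    · ring
    · simp
  have hi : Integrable (fun v : Euc d => exp (-‖v‖ ^ 2 / 2)) := by
    by_contra hc
    rw [integral_undef hc] at h'
    linarith
  rw [← ofReal_integral_eq_lintegral_ofReal (hi.const_mul _)
    (Filter.Eventually.of_forall fun x => by positivity), integral_const_mul, h',
    ← Real.rpow_add (by positivity)]
  simp [neg_div]

/-- scaling -/
lemma gauss_affine (d : ℕ) {b : ℝ} (hb : 0 < b) : ∃ k : ℝ≥0∞, ∀ (m : Euc d)
    (f : Euc d → ℝ≥0∞), Measurable f →
    ∫⁻ w, f (m + b • w) ∂(stdGaussian d) =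
      k * ∫⁻ x, ENNReal.ofReal (exp (-‖x - m‖ ^ 2 / (2 * b ^ 2))) * f x := by
  refine ⟨gc d * ENNReal.ofReal |(b ^ d)⁻¹|, fun m f hf => ?_⟩
  unfold stdGaussian
  rw [lintegral_withDensity_eq_lintegral_mul _ (by fun_prop) (by fun_prop)]
  have h1 : ∫⁻ w, ENNReal.ofReal (exp (-‖w‖ ^ 2 / 2)) * f (m + b • w) =
      ENNReal.ofReal |(b ^ d)⁻¹| *
        ∫⁻ x, ENNReal.ofReal (exp (-‖x - m‖ ^ 2 / (2 * b ^ 2))) * f x := by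
    have hF : Measurable fun x : Euc d =>
      ENNReal.ofReal (exp (-‖x‖ ^ 2 / (2 * b ^ 2))) * f (m + x) := by fun_prop
    have hmap := Measure.map_addHaar_smul (volume : Measure (Euc d)) hb.ne'
    simp only [finrank_euclideanSpace, Fintype.card_fin] at hmap
    have h2 := lintegral_map (μ := volume) hF (measurable_const_smul b)
    rw [hmap, lintegral_smul_measure] at h2
    have h3 := lintegral_add_right_eq_self (μ := (volume : Measure (Euc d)))
      (fun x => ENNReal.ofReal (exp (-‖x - m‖ ^ 2 / (2 * b ^ 2))) * f x) m
    rw [← h3]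
    simp only [add_sub_cancel_right]
    rw [smul_eq_mul] at h2
    simp only [add_comm _ m]
    rw [h2]
    congr 1
    funext w
    rw [norm_smul, Real.norm_of_nonneg hb.le]
    congr 3
    field_simp
  rw [mul_assoc, ← h1, ← lintegral_const_mul _ (by fun_prop)]
  congr 1
  funext w
  simp only [Pi.mul_apply, gc]
  rw [ENNReal.ofReal_mul (by positivity), mul_assoc]

lemma gauss_conv (d : ℕ) {a b : ℝ} (ha : 0 < a) (hab : a ^ 2 + b ^ 2 = 1)
    (f : Euc d → ℝ≥0∞) (hf : Measurable f) :
    ∫⁻ w, ∫⁻ z, f (a • z + b • w) ∂(stdGaussian d) ∂(stdGaussian d) =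
      ∫⁻ u, f u ∂(stdGaussian d) := by
  have := gauss_prob d
  obtain ⟨k, hk⟩ := gauss_affine d ha
  have e1 : ∀ w : Euc d, ∫⁻ z, f (a • z + b • w) ∂(stdGaussian d) =
      k * ∫⁻ x, ENNReal.ofReal (exp (-‖x - b • w‖ ^ 2 / (2 * a ^ 2))) * f x := by
    intro w
    rw [← hk _ f hf]
    simp only [add_comm]
  simp only [e1]
  have hone : ∀ u : Euc d,
      k * ∫⁻ w, ENNReal.ofReal (exp (-‖w - b • u‖ ^ 2 / (2 * a ^ 2))) = 1 := by
    intro u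
    have := hk (b • u) (fun _ => 1) measurable_const
    simpa using this.symm
  have key : ∀ w x : Euc d, -‖w‖ ^ 2 / 2 + -‖x - b • w‖ ^ 2 / (2 * a ^ 2) =
      -‖x‖ ^ 2 / 2 + -‖w - b • x‖ ^ 2 / (2 * a ^ 2) := by
    intro w x
    rw [norm_sub_sq_real, norm_sub_sq_real, norm_smul, norm_smul, mul_pow, mul_pow,
      Real.norm_eq_abs, sq_abs, inner_smul_right, inner_smul_right, real_inner_comm x w]
    have hb : b ^ 2 = 1 - a ^ 2 := by linarith
    rw [hb]
    field_simp
    ring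
  have hm : Measurable fun w : Euc d =>
      k * ∫⁻ x, ENNReal.ofReal (exp (-‖x - b • w‖ ^ 2 / (2 * a ^ 2))) * f x := by
    apply Measurable.const_mul
    have h : Measurable (fun q : Euc d × Euc d =>
      ENNReal.ofReal (exp (-‖q.2 - b • q.1‖ ^ 2 / (2 * a ^ 2))) * f q.2) := by fun_prop
    exact h.lintegral_prod_right'
  unfold stdGaussian
  rw [lintegral_withDensity_eq_lintegral_mul _ (by fun_prop) hm,
    lintegral_withDensity_eq_lintegral_mul _ (by fun_prop) hf]
  simp only [Pi.mul_apply]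
  set C := (2 * π) ^ (-(d : ℝ) / 2) with hC
  have hC0 : 0 ≤ C := by positivity
  calc ∫⁻ w : Euc d, ENNReal.ofReal (C * exp (-‖w‖ ^ 2 / 2)) *
        (k * ∫⁻ x, ENNReal.ofReal (exp (-‖x - b • w‖ ^ 2 / (2 * a ^ 2))) * f x)
      = ∫⁻ w : Euc d, ∫⁻ x, ENNReal.ofReal (C * exp (-‖x‖ ^ 2 / 2)) * f x *
        (k * ENNReal.ofReal (exp (-‖w - b • x‖ ^ 2 / (2 * a ^ 2)))) := by
        congr 1
        funext w
        rw [← lintegral_const_mul _ (by fun_prop), ← lintegral_const_mul _ (by fun_prop)]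
        congr 1
        funext x
        have hh : ENNReal.ofReal (C * exp (-‖w‖ ^ 2 / 2)) *
          ENNReal.ofReal (exp (-‖x - b • w‖ ^ 2 / (2 * a ^ 2))) =
          ENNReal.ofReal (C * exp (-‖x‖ ^ 2 / 2)) *
          ENNReal.ofReal (exp (-‖w - b • x‖ ^ 2 / (2 * a ^ 2))) := by
          rw [← ENNReal.ofReal_mul (by positivity), ← ENNReal.ofReal_mul (by positivity),
            mul_assoc, mul_assoc, ← exp_add, ← exp_add, key]
        calc _ = (ENNReal.ofReal (C * exp (-‖w‖ ^ 2 / 2)) *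
          ENNReal.ofReal (exp (-‖x - b • w‖ ^ 2 / (2 * a ^ 2)))) * (k * f x) := by ring
          _ = _ := by rw [hh]; ring
    _ = ∫⁻ x : Euc d, ∫⁻ w, ENNReal.ofReal (C * exp (-‖x‖ ^ 2 / 2)) * f x *
        (k * ENNReal.ofReal (exp (-‖w - b • x‖ ^ 2 / (2 * a ^ 2)))) := by
        apply lintegral_lintegral_swap
        apply Measurable.aemeasurable
        unfold Function.uncurry
        fun_prop
    _ = _ := by
        congr 1
        funext x
        rw [lintegral_const_mul _ (by fun_prop), lintegral_const_mul _ (by fun_prop), hone,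
          mul_one]

/-- disintegration -/
lemma disint (d : ℕ) (p : Measure (Euc d)) [IsProbabilityMeasure p] {t : ℝ} (ht : 0 < t)
    (f : Euc d × Euc d → ℝ≥0∞) (hf : Measurable f) :
    ∫⁻ x, ∫⁻ z, f (z, x) ∂(posterior d p t x) ∂(ouMarginal d p t) =
      ∫⁻ z, ∫⁻ w, f (z, exp (-t) • z + Real.sqrt (1 - exp (-2 * t)) • w) ∂(stdGaussian d) ∂p := by
  have := gauss_prob d
  have hb := one_sub_pos ht
  obtain ⟨k, hk⟩ := gauss_affine d (Real.sqrt_pos.2 hb)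
  rw [Real.sq_sqrt hb.le] at hk
  have gen : ∀ g : Euc d × Euc d → ℝ≥0∞, Measurable g →
      ∫⁻ z, ∫⁻ w, g (z, exp (-t) • z + Real.sqrt (1 - exp (-2 * t)) • w) ∂(stdGaussian d) ∂p =
      k * ∫⁻ x, ∫⁻ z, wt d t x z * g (z, x) ∂p := by
    intro g hg
    have hw := wt_meas d t
    have hmm : Measurable fun q : Euc d × Euc d => wt d t q.2 q.1 * g q :=
      (hw.comp measurable_swap).mul hg
    have e : ∀ z, ∫⁻ w, g (z, exp (-t) • z + Real.sqrt (1 - exp (-2 * t)) • w) ∂(stdGaussian d) =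
        k * ∫⁻ x, wt d t x z * g (z, x) := fun z =>
      hk (exp (-t) • z) (fun x => g (z, x)) (by fun_prop)
    simp only [e]
    rw [lintegral_const_mul _ hmm.lintegral_prod_right', lintegral_lintegral_swap hmm.aemeasurable]
  have hH := lintegral_posterior_meas d p t hf
  rw [gen f hf]
  unfold ouMarginal
  rw [lintegral_map hH (by fun_prop)]
  have hcomp : Measurable fun xz : Euc d × Euc d =>
      exp (-t) • xz.1 + Real.sqrt (1 - exp (-2 * t)) • xz.2 := by fun_prop
  rw [lintegral_prod]
  swap
  · exact (hH.comp hcomp).aemeasurable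
  rw [gen (fun q => ∫⁻ z, f (z, q.2) ∂(posterior d p t q.2)) (hH.comp measurable_snd)]
  congr 2
  funext x
  simp only
  rw [lintegral_mul_const _ (wt_meas_right d t x), lintegral_posterior d p t x (by fun_prop),
    ← mul_assoc]
  change nz d p t x * _ * _ = _
  rw [ENNReal.mul_inv_cancel (nz_ne_zero d p t x)
    (ne_top_of_le_ne_top ENNReal.one_ne_top (nz_le_one d p ht x)), one_mul]

lemma var_min {d : ℕ} (μ : Measure (Euc d)) [IsProbabilityMeasure μ]
    (h : MemLp (fun z => z) 2 μ) (c : Euc d) :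
    ∫ z, ‖z - ∫ y, y ∂μ‖ ^ 2 ∂μ ≤ ∫ z, ‖z - c‖ ^ 2 ∂μ := by
  set m := ∫ y, y ∂μ with hm
  have hi : Integrable (fun z => z) μ := h.integrable (by norm_num)
  have h1 : Integrable (fun z => ‖z - m‖ ^ 2) μ := (h.sub (memLp_const m)).integrable_norm_pow (by norm_num)
  have hz : ∫ z, inner ℝ (m - c) (z - m) ∂μ = 0 := by
    have hi2 : Integrable (fun z => z - m) μ := hi.sub (integrable_const m)
    rw [integral_inner hi2, integral_sub hi (integrable_const m)]
    simp [hm]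
  have h3 : Integrable (fun z => inner ℝ (m - c) (z - m)) μ :=
    (hi.sub (integrable_const m)).const_inner _
  have : ∀ z, ‖z - c‖ ^ 2 = ‖z - m‖ ^ 2 + 2 * inner ℝ (m - c) (z - m) + ‖m - c‖ ^ 2 := by
    intro z
    have : z - c = (z - m) + (m - c) := by abel
    rw [this, norm_add_sq_real, real_inner_comm]
  rw [integral_congr_ae (Filter.Eventually.of_forall this)]
  have h4 : Integrable (fun z => ‖z - m‖ ^ 2 + 2 * inner ℝ (m - c) (z - m)) μ :=
    h1.add (h3.const_mul 2)
  rw [integral_add h4 (integrable_const _),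
    integral_add h1 (h3.const_mul 2), integral_const_mul, hz]
  simp

lemma enorm_sq {d : ℕ} (z : Euc d) : ‖z‖ₑ ^ 2 = ENNReal.ofReal (‖z‖ ^ 2) := by
  rw [ENNReal.ofReal_pow (norm_nonneg _), ofReal_norm]

lemma var_lint {d : ℕ} (μ : Measure (Euc d)) [IsProbabilityMeasure μ]
    (h : MemLp (fun z => z) 2 μ) (c : Euc d) :
    ∫⁻ z, ‖z - c‖ₑ ^ 2 ∂μ = ENNReal.ofReal (∫ z, ‖z - c‖ ^ 2 ∂μ) := by
  have h1 : Integrable (fun z => ‖z - c‖ ^ 2) μ := (h.sub (memLp_const c)).integrable_norm_pow (by norm_num)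
  rw [ofReal_integral_eq_lintegral_ofReal h1 (Filter.Eventually.of_forall fun x => by positivity)]
  simp only [enorm_sq]

lemma memLp_p {d : ℕ} {p : Measure (Euc d)} (hm2 : Integrable (fun x => ‖x‖ ^ 2) p) :
    MemLp (fun z => z) 2 p :=
  (memLp_two_iff_integrable_sq_norm (by fun_prop)).2 hm2

lemma memLp_post {d : ℕ} {p : Measure (Euc d)} [IsProbabilityMeasure p]
    (hm2 : Integrable (fun x => ‖x‖ ^ 2) p)
    {t : ℝ} (ht : 0 < t) (x : Euc d) : MemLp (fun z => z) 2 (posterior d p t x) := by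
  have h := memLp_p hm2
  rw [posterior_eq]
  apply MemLp.smul_measure _ (ENNReal.inv_ne_top.2 (nz_ne_zero d p t x))
  apply h.mono_measure
  calc p.withDensity (wt d t x) ≤ p.withDensity 1 :=
        withDensity_mono (Filter.Eventually.of_forall fun z => wt_le_one d ht x z)
    _ = p := withDensity_one

/-- The risk of an estimator. -/
def risk (d : ℕ) (p : Measure (Euc d)) (t : ℝ) (g : Euc d → Euc d) : ℝ≥0∞ :=
  ∫⁻ z, ∫⁻ w, ‖z - g (exp (-t) • z + Real.sqrt (1 - exp (-2 * t)) • w)‖ₑ ^ 2 ∂(stdGaussian d) ∂p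

lemma risk_eq (d : ℕ) (p : Measure (Euc d)) [IsProbabilityMeasure p] {t : ℝ} (ht : 0 < t)
    (g : Euc d → Euc d) (hg : Measurable g) :
    risk d p t g = ∫⁻ x, ∫⁻ z, ‖z - g x‖ₑ ^ 2 ∂(posterior d p t x) ∂(ouMarginal d p t) :=
  (disint d p ht (fun q => ‖q.1 - g q.2‖ₑ ^ 2) (by fun_prop)).symm

lemma risk_min (d : ℕ) (p : Measure (Euc d)) [IsProbabilityMeasure p]
    (hm2 : Integrable (fun x => ‖x‖ ^ 2) p) {t : ℝ} (ht : 0 < t)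
    (g : Euc d → Euc d) (hg : Measurable g) :
    risk d p t (postMean d p t) ≤ risk d p t g := by
  rw [risk_eq d p ht _ hg, risk_eq d p ht _ (postMean_meas d p ht)]
  apply lintegral_mono
  intro x
  have := posterior_prob d p ht x
  have h := memLp_post hm2 ht x
  simp only
  rw [var_lint _ h, var_lint _ h]
  exact ENNReal.ofReal_le_ofReal (var_min _ h _)

lemma risk_const (d : ℕ) (p : Measure (Euc d)) [IsProbabilityMeasure p]
    (hm2 : Integrable (fun x => ‖x‖ ^ 2) p) (t : ℝ) (c : Euc d) :
    risk d p t (fun _ => c) = ENNReal.ofReal (∫ z, ‖z - c‖ ^ 2 ∂p) := by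
  have := gauss_prob d
  rw [← var_lint p (memLp_p hm2)]
  simp [risk]

lemma integral_eq_risk (d : ℕ) (p : Measure (Euc d)) [IsProbabilityMeasure p]
    (hm2 : Integrable (fun x => ‖x‖ ^ 2) p) {t : ℝ} (ht : 0 < t) :
    ∫ x, postTrCov d p t x ∂(ouMarginal d p t) = (risk d p t (postMean d p t)).toReal := by
  have hpm := postMean_meas d p ht
  have e : ∀ x, ∫⁻ z, ‖z - postMean d p t x‖ₑ ^ 2 ∂(posterior d p t x) =
      ENNReal.ofReal (postTrCov d p t x) := by
    intro x
    have := posterior_prob d p ht x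
    exact var_lint _ (memLp_post hm2 ht x) _
  have hnn : ∀ x, 0 ≤ postTrCov d p t x := fun x => integral_nonneg fun z => by positivity
  have hmeas : Measurable (postTrCov d p t) := by
    have h := (lintegral_posterior_meas d p t
      (f := fun q => ‖q.1 - postMean d p t q.2‖ₑ ^ 2) (by fun_prop)).ennreal_toReal
    simp only [e, ENNReal.toReal_ofReal (hnn _)] at h
    exact h
  rw [risk_eq d p ht _ hpm, integral_eq_lintegral_of_nonneg_ae
    (Filter.Eventually.of_forall hnn) hmeas.aestronglyMeasurable]
  simp only [e]

lemma risk_semigroup (d : ℕ) (p : Measure (Euc d)) {s t : ℝ} (hs : 0 < s)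
    (hst : s ≤ t) (g : Euc d → Euc d) (hg : Measurable g) :
    risk d p t g = ∫⁻ z, ∫⁻ w, ∫⁻ v, ‖z - g (exp (-(t - s)) • (exp (-s) • z +
      Real.sqrt (1 - exp (-2 * s)) • v) + Real.sqrt (1 - exp (-2 * (t - s))) • w)‖ₑ ^ 2
      ∂(stdGaussian d) ∂(stdGaussian d) ∂p := by
  unfold risk
  congr 1
  funext z
  have hbs := one_sub_pos hs
  have hbt := one_sub_pos (hs.trans_le hst)
  have hbr : 0 ≤ 1 - exp (-2 * (t - s)) := by
    have : exp (-2 * (t - s)) ≤ 1 := by rw [exp_le_one_iff]; linarith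
    linarith
  set bs := Real.sqrt (1 - exp (-2 * s)) with hbs'
  set bt := Real.sqrt (1 - exp (-2 * t)) with hbt'
  set br := Real.sqrt (1 - exp (-2 * (t - s))) with hbr'
  have hbs0 : 0 < bs := Real.sqrt_pos.2 hbs
  have hbt0 : 0 < bt := Real.sqrt_pos.2 hbt
  have sqs : bs ^ 2 = 1 - exp (-2 * s) := Real.sq_sqrt hbs.le
  have sqt : bt ^ 2 = 1 - exp (-2 * t) := Real.sq_sqrt hbt.le
  have sqr : br ^ 2 = 1 - exp (-2 * (t - s)) := Real.sq_sqrt hbr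
  have hab : (exp (-(t - s)) * bs / bt) ^ 2 + (br / bt) ^ 2 = 1 := by
    have h1 : exp (-(t - s)) ^ 2 = exp (-2 * (t - s)) := by
      rw [← exp_nat_mul]; congr 1; push_cast; ring
    have h2 : exp (-2 * (t - s)) * exp (-2 * s) = exp (-2 * t) := by
      rw [← exp_add]; congr 1; ring
    rw [div_pow, div_pow, mul_pow, h1, sqs, sqt, sqr, ← add_div, div_eq_one_iff_eq hbt.ne', ← h2]
    ring
  rw [← gauss_conv d (by positivity) hab
    (fun w => ‖z - g (exp (-t) • z + bt • w)‖ₑ ^ 2) (by fun_prop)]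
  congr 1
  funext w
  congr 1
  funext v
  congr 4
  have h3 : exp (-(t - s)) * exp (-s) = exp (-t) := by
    rw [← exp_add]; congr 1; ring
  rw [smul_add, smul_add, smul_smul, smul_smul, smul_smul, smul_smul, h3,
    mul_div_cancel₀ _ hbt0.ne', mul_div_cancel₀ _ hbt0.ne', add_assoc]

lemma risk_mono (d : ℕ) (p : Measure (Euc d)) [IsProbabilityMeasure p]
    (hm2 : Integrable (fun x => ‖x‖ ^ 2) p) {s t : ℝ} (hs : 0 < s) (hst : s ≤ t)
    (g : Euc d → Euc d) (hg : Measurable g) :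
    risk d p s (postMean d p s) ≤ risk d p t g := by
  have := gauss_prob d
  rw [risk_semigroup d p hs hst g hg, lintegral_lintegral_swap]
  · calc risk d p s (postMean d p s)
        = ∫⁻ _, risk d p s (postMean d p s) ∂(stdGaussian d) := by simp
      _ ≤ _ := by
        apply lintegral_mono
        intro w
        exact risk_min d p hm2 hs (fun x => g (exp (-(t - s)) • x +
          Real.sqrt (1 - exp (-2 * (t - s))) • w)) (by fun_prop)
  · apply Measurable.aemeasurable
    have h : Measurable fun q : (Euc d × Euc d) × Euc d => ‖q.1.1 - g (exp (-(t - s)) •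
      (exp (-s) • q.1.1 + Real.sqrt (1 - exp (-2 * s)) • q.2) +
      Real.sqrt (1 - exp (-2 * (t - s))) • q.1.2)‖ₑ ^ 2 := by fun_prop
    exact h.lintegral_prod_right'

/-- **Monotonicity of the expected posterior variance** (used in the proof of
Proposition 3.1): for `0 < s ≤ t`,
`E_{x ∼ p_s}[Tr Σ_s(x)] ≤ E_{x ∼ p_t}[Tr Σ_t(x)]`, and for every `t > 0`,
`E_{x ∼ p_t}[Tr Σ_t(x)] ≤ Tr Cov(p)`. -/
theorem expected_posterior_variance_monotone
    (d : ℕ) (hd : 1 ≤ d) (V : Euc d → ℝ) (hV : Measurable V)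
    (p : Measure (Euc d)) (hprob : IsProbabilityMeasure p)
    (hp : p = ((gibbs d V) Set.univ)⁻¹ • gibbs d V)
    (hm2 : Integrable (fun x => ‖x‖ ^ 2) p) :
    (∀ s t : ℝ, 0 < s → s ≤ t →
      (∫ x, postTrCov d p s x ∂(ouMarginal d p s)) ≤
        ∫ x, postTrCov d p t x ∂(ouMarginal d p t)) ∧
    (∀ t : ℝ, 0 < t →
      (∫ x, postTrCov d p t x ∂(ouMarginal d p t)) ≤
        ∫ x, ‖x - ∫ y, y ∂p‖ ^ 2 ∂p) := by
  have hfin : ∀ t : ℝ, 0 < t → risk d p t (postMean d p t) ≠ ⊤ := fun t ht =>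
    ne_top_of_le_ne_top (by rw [risk_const d p hm2]; exact ENNReal.ofReal_ne_top)
      (risk_min d p hm2 ht (fun _ => 0) measurable_const)
  refine ⟨fun s t hs hst => ?_, fun t ht => ?_⟩
  · have ht := hs.trans_le hst
    rw [integral_eq_risk d p hm2 hs, integral_eq_risk d p hm2 ht]
    exact ENNReal.toReal_mono (hfin t ht) (risk_mono d p hm2 hs hst _ (postMean_meas d p ht))
  · rw [integral_eq_risk d p hm2 ht]
    have h := risk_min d p hm2 ht (fun _ => ∫ y, y ∂p) measurable_const
    rw [risk_const d p hm2] at h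
    exact ENNReal.toReal_le_of_le_ofReal (integral_nonneg fun z => by positivity) h
end
end

section
/- (Second moment of the score in terms of the posterior covariance, equation (2-norm of score) used in Lemma B.4.) For every t > 0, E_{x ∼ p_t}[ ‖∇ ln p_t(x)‖² ] = d/(1 − e^{−2t}) − (e^{−2t}/(1 − e^{−2t})²) E_{x ∼ p_t}[Tr Σ_t(x)]. -/
open MeasureTheory Real
open scoped ENNReal RealInnerProductSpace

noncomputable section

def kk (d : ℕ) (a s : ℝ) (x z : Euc d) : ℝ := exp (-‖x - a • z‖ ^ 2 / (2 * s))

lemma gauss2 (d : ℕ) (hd : 1 ≤ d) (s : ℝ) (hs : 0 < s) :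
    ∫ u : Euc d, ‖u‖ ^ 2 * exp (-‖u‖ ^ 2 / (2 * s)) = s * d * (2 * π * s) ^ ((d : ℝ) / 2) := by
  have : Nonempty (Fin d) := ⟨⟨0, hd⟩⟩
  have : Nontrivial (Euc d) := inferInstance
  have hb : 0 < 1 / (2 * s) := by positivity
  have h0 := GaussianFourier.integral_rexp_neg_mul_sq_norm (V := Euc d) hb
  have h1 := integral_fun_norm_addHaar (volume : Measure (Euc d))
    (fun r => exp (-(1 / (2 * s)) * r ^ 2))
  have h2 := integral_fun_norm_addHaar (volume : Measure (Euc d))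
    (fun r => r ^ 2 * exp (-(1 / (2 * s)) * r ^ 2))
  have h3 : ∫ u : Euc d, ‖u‖ ^ 2 * exp (-‖u‖ ^ 2 / (2 * s)) =
      ∫ u : Euc d, ‖u‖ ^ 2 * exp (-(1 / (2 * s)) * ‖u‖ ^ 2) := by
    congr 1; ext u; congr 2; ring
  have hfr : Module.finrank ℝ (Euc d) = d := by simp
  rw [h3, h2]
  rw [h1] at h0
  rw [hfr] at h0 ⊢
  have hpow : ∀ q : ℝ, -1 < q → ∫ x in Set.Ioi (0:ℝ), x ^ q * exp (-(1 / (2 * s)) * x ^ (2:ℝ)) =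
      (1 / (2 * s)) ^ (-(q + 1) / 2) * (1 / 2) * Gamma ((q + 1) / 2) := fun q hq =>
    integral_rpow_mul_exp_neg_mul_rpow (by norm_num) hq hb
  have hd' : (1:ℝ) ≤ d := by exact_mod_cast hd
  have e1 : ∫ y in Set.Ioi (0:ℝ), y ^ (d - 1) • exp (-(1 / (2 * s)) * y ^ 2) =
      (1 / (2 * s)) ^ (-(d : ℝ) / 2) * (1 / 2) * Gamma ((d : ℝ) / 2) := by
    have := hpow ((d : ℝ) - 1) (by linarith)
    rw [sub_add_cancel] at this
    rw [← this]
    refine setIntegral_congr_fun measurableSet_Ioi fun y hy => ?_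
    simp only [smul_eq_mul]
    rw [← Real.rpow_natCast y (d - 1), Nat.cast_sub hd]
    norm_num
  have e2 : ∫ y in Set.Ioi (0:ℝ), y ^ (d - 1) • (y ^ 2 * exp (-(1 / (2 * s)) * y ^ 2)) =
      s * d * ((1 / (2 * s)) ^ (-(d : ℝ) / 2) * (1 / 2) * Gamma ((d : ℝ) / 2)) := by
    have := hpow ((d : ℝ) + 1) (by linarith)
    have g : ((d : ℝ) + 1 + 1) / 2 = (d : ℝ) / 2 + 1 := by ring
    have g' : -((d : ℝ) + 1 + 1) / 2 = -(d : ℝ) / 2 + (-1) := by ring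
    rw [g, g', Gamma_add_one (by positivity), Real.rpow_add hb, Real.rpow_neg_one] at this
    trans ∫ x in Set.Ioi (0:ℝ), x ^ ((d:ℝ) + 1) * exp (-(1 / (2 * s)) * x ^ (2:ℝ))
    · refine setIntegral_congr_fun measurableSet_Ioi fun y hy => ?_
      simp only [smul_eq_mul]
      have : (d : ℝ) + 1 = ((d - 1 + 2 : ℕ) : ℝ) := by
        rw [Nat.cast_add, Nat.cast_sub hd]; push_cast; ring
      rw [this, Real.rpow_natCast, pow_add]
      norm_num [mul_assoc]
    · rw [this]; field_simp
  rw [e1] at h0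
  rw [e2]
  have h4 : π / (1 / (2 * s)) = 2 * π * s := by field_simp
  rw [h4] at h0
  rw [← h0]
  simp only [nsmul_eq_mul, smul_eq_mul]
  ring

lemma gauss2_int (d : ℕ) (hd : 1 ≤ d) (s : ℝ) (hs : 0 < s) :
    Integrable (fun u : Euc d => ‖u‖ ^ 2 * exp (-‖u‖ ^ 2 / (2 * s))) := by
  by_contra h
  have h1 := gauss2 d hd s hs
  rw [integral_undef h] at h1
  have hd' : (0:ℝ) < d := by exact_mod_cast hd
  have : 0 < s * d * (2 * π * s) ^ ((d : ℝ) / 2) := by positivity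
  linarith

lemma gauss_change (d : ℕ) (s : ℝ) (hs : 0 < s) (w : Euc d) (f : Euc d → ℝ≥0∞)
    (hf : Measurable f) :
    ∫⁻ g, ENNReal.ofReal ((2 * π) ^ (-(d : ℝ) / 2) * exp (-‖g‖ ^ 2 / 2)) *
        f (w + Real.sqrt s • g) =
      ∫⁻ x, ENNReal.ofReal ((2 * π * s) ^ (-(d : ℝ) / 2) * exp (-‖x - w‖ ^ 2 / (2 * s))) * f x := by
  conv_rhs => rw [← lintegral_add_left_eq_self _ w]
  set h : Euc d → ℝ≥0∞ := fun y =>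
    ENNReal.ofReal ((2 * π * s) ^ (-(d : ℝ) / 2) * exp (-‖y‖ ^ 2 / (2 * s))) * f (w + y) with hh
  have hhm : Measurable h := by
    rw [hh]; fun_prop
  have hr : Real.sqrt s ≠ 0 := by positivity
  have hm := Measure.map_addHaar_smul (volume : Measure (Euc d)) hr
  have h2 : ∫⁻ y, h y ∂(Measure.map (Real.sqrt s • ·) (volume : Measure (Euc d))) =
      ∫⁻ g, h (Real.sqrt s • g) := lintegral_map hhm (by fun_prop)
  rw [hm, lintegral_smul_measure] at h2
  have hfr : Module.finrank ℝ (Euc d) = d := by simp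
  rw [hfr] at h2
  simp only [add_sub_cancel_left]
  change _ = ∫⁻ y, h y
  have hpos : 0 < Real.sqrt s ^ d := by positivity
  have h3 : ∫⁻ y, h y = ENNReal.ofReal (Real.sqrt s ^ d) * ∫⁻ g, h (Real.sqrt s • g) := by
    rw [← h2, smul_eq_mul, ← mul_assoc, ← ENNReal.ofReal_mul hpos.le, abs_of_pos (by positivity),
      mul_inv_cancel₀ hpos.ne']
    simp
  rw [h3, ← lintegral_const_mul _ (by fun_prop)]
  congr 1; ext g
  simp only [hh]
  rw [← mul_assoc, ← ENNReal.ofReal_mul hpos.le, norm_smul, mul_pow, Real.norm_eq_abs, sq_abs,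
    Real.sq_sqrt hs.le]
  congr 2
  have e1 : -(s * ‖g‖ ^ 2) / (2 * s) = -‖g‖ ^ 2 / 2 := by field_simp
  rw [e1, Real.mul_rpow (by positivity) hs.le, ← mul_assoc]
  congr 1
  have : Real.sqrt s ^ d = s ^ ((d:ℝ) / 2) := by
    rw [Real.sqrt_eq_rpow, ← Real.rpow_natCast, ← Real.rpow_mul hs.le]; congr 1; ring
  rw [this, mul_left_comm, ← Real.rpow_add hs]
  have : (d:ℝ) / 2 + -(d:ℝ) / 2 = 0 := by ring
  rw [this]; simp

lemma kk_cont (d : ℕ) (a s : ℝ) : Continuous (fun q : Euc d × Euc d => kk d a s q.1 q.2) := by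
  unfold kk; fun_prop

lemma kk_cont_right (d : ℕ) (a s : ℝ) (x : Euc d) : Continuous (fun z : Euc d => kk d a s x z) := by
  unfold kk; fun_prop

lemma kk_pos (d : ℕ) (a s : ℝ) (x z : Euc d) : 0 < kk d a s x z := by
  unfold kk; positivity

lemma kk_le (d : ℕ) (a s : ℝ) (hs : 0 < s) (x z : Euc d) : kk d a s x z ≤ 1 := by
  unfold kk
  rw [Real.exp_le_one_iff]
  apply div_nonpos_of_nonpos_of_nonneg
  · have := sq_nonneg ‖x - a • z‖; linarith
  · positivity

lemma kk_int (d : ℕ) (a s : ℝ) (hs : 0 < s) (p : Measure (Euc d)) [IsProbabilityMeasure p]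
    (x : Euc d) : Integrable (fun z => kk d a s x z) p := by
  refine Integrable.mono' (integrable_const (1:ℝ))
    (kk_cont_right d a s x).aestronglyMeasurable (ae_of_all _ fun z => ?_)
  rw [Real.norm_eq_abs, abs_of_pos (kk_pos d a s x z)]
  exact kk_le d a s hs x z

lemma Zpos (d : ℕ) (a s : ℝ) (hs : 0 < s) (p : Measure (Euc d)) [IsProbabilityMeasure p]
    (x : Euc d) : 0 < ∫ z, kk d a s x z ∂p := by
  rw [integral_pos_iff_support_of_nonneg (fun z => (kk_pos d a s x z).le) (kk_int d a s hs p x)]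
  have : Function.support (fun z => kk d a s x z) = Set.univ := by
    ext z; simp [(kk_pos d a s x z).ne']
  rw [this]; simp

lemma ouMarginal_eq (d : ℕ) (p : Measure (Euc d)) [IsProbabilityMeasure p] (t : ℝ)
    (hs : 0 < 1 - exp (-2 * t)) :
    ouMarginal d p t = volume.withDensity (fun x => ENNReal.ofReal (ouDensity d p t x)) := by
  have hsf : SFinite (stdGaussian d) := by unfold stdGaussian; infer_instance
  have hden : ∀ x, ENNReal.ofReal (ouDensity d p t x) = ∫⁻ z, ENNReal.ofReal
      ((2 * π * (1 - exp (-2 * t))) ^ (-(d : ℝ) / 2) *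
        exp (-‖x - exp (-t) • z‖ ^ 2 / (2 * (1 - exp (-2 * t))))) ∂p := by
    intro x
    unfold ouDensity
    rw [← integral_const_mul, ofReal_integral_eq_lintegral_ofReal]
    · exact (kk_int d _ _ hs p x).const_mul _
    · exact ae_of_all _ fun z => by simp only [Pi.zero_apply]; positivity
  simp_rw [hden]
  refine Measure.ext_of_lintegral _ fun f hf => ?_
  unfold ouMarginal
  rw [lintegral_map hf (by fun_prop), lintegral_prod _ (by fun_prop),
    lintegral_withDensity_eq_lintegral_mul _
      (Measurable.lintegral_prod_right' (f := fun q : Euc d × Euc d => ENNReal.ofReal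
      ((2 * π * (1 - exp (-2 * t))) ^ (-(d : ℝ) / 2) *
        exp (-‖q.1 - exp (-t) • q.2‖ ^ 2 / (2 * (1 - exp (-2 * t)))))) (by fun_prop)) hf]
  simp only [Pi.mul_apply]
  have h1 : ∀ z : Euc d, ∫⁻ g, f (exp (-t) • z + Real.sqrt (1 - exp (-2 * t)) • g) ∂(stdGaussian d) =
      ∫⁻ x, ENNReal.ofReal ((2 * π * (1 - exp (-2 * t))) ^ (-(d : ℝ) / 2) *
        exp (-‖x - exp (-t) • z‖ ^ 2 / (2 * (1 - exp (-2 * t))))) * f x := by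
    intro z
    rw [← gauss_change d _ hs _ f hf, stdGaussian,
      lintegral_withDensity_eq_lintegral_mul _ (by fun_prop) (by fun_prop)]
    rfl
  simp_rw [h1]
  rw [lintegral_lintegral_swap (by fun_prop)]
  congr 1; ext x
  rw [lintegral_mul_const _ (by fun_prop)]

lemma Z_grad (d : ℕ) (a s : ℝ) (hs : 0 < s) (p : Measure (Euc d)) [IsProbabilityMeasure p]
    (h1 : Integrable (fun z : Euc d => z) p) (x : Euc d) :
    HasFDerivAt (fun y => ∫ z, kk d a s y z ∂p)
      (innerSL ℝ (∫ z, kk d a s x z • (-(1 / s)) • (x - a • z) ∂p)) x := by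
  have hmeas : AEStronglyMeasurable (fun z => kk d a s x z • (-(1 / s)) • (x - a • z)) p := by
    have := kk_cont_right d a s x
    exact Continuous.aestronglyMeasurable (by fun_prop)
  have hb : ∀ y z : Euc d, ‖kk d a s y z • (-(1 / s)) • (y - a • z)‖ ≤
      1 / s * (‖y‖ + |a| * ‖z‖) := by
    intro y z
    rw [norm_smul, norm_smul, Real.norm_eq_abs, abs_of_pos (kk_pos d a s y z), norm_neg,
      Real.norm_eq_abs, abs_of_pos (by positivity : 0 < 1 / s)]
    have h2 : ‖y - a • z‖ ≤ ‖y‖ + |a| * ‖z‖ := by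
      refine (norm_sub_le _ _).trans ?_
      rw [norm_smul, Real.norm_eq_abs]
    calc kk d a s y z * (1 / s * ‖y - a • z‖) ≤ 1 * (1 / s * ‖y - a • z‖) := by
          gcongr; exact kk_le d a s hs y z
      _ ≤ _ := by rw [one_mul]; gcongr
  have hint : Integrable (fun z => kk d a s x z • (-(1 / s)) • (x - a • z)) p := by
    refine Integrable.mono' (g := fun z => 1 / s * (‖x‖ + |a| * ‖z‖)) ?_ hmeas
      (ae_of_all _ fun z => hb x z)
    exact ((integrable_const _).add (h1.norm.const_mul _)).const_mul _
  have hF : (∫ z, innerSL ℝ (kk d a s x z • (-(1 / s)) • (x - a • z)) ∂p) =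
      innerSL ℝ (∫ z, kk d a s x z • (-(1 / s)) • (x - a • z) ∂p) :=
    ContinuousLinearMap.integral_comp_comm (innerSL ℝ) hint
  rw [← hF]
  refine hasFDerivAt_integral_of_dominated_of_fderiv_le
    (F' := fun y z => innerSL ℝ (kk d a s y z • (-(1 / s)) • (y - a • z)))
    (bound := fun z => 1 / s * ((‖x‖ + 1) + |a| * ‖z‖))
    (Metric.ball_mem_nhds x one_pos) ?_ (kk_int d a s hs p x) ?_ ?_ ?_ ?_
  · exact Filter.Eventually.of_forall fun y => (kk_cont_right d a s y).aestronglyMeasurable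
  · exact (innerSL ℝ).continuous.comp_aestronglyMeasurable hmeas
  · refine ae_of_all _ fun z y hy => ?_
    rw [innerSL_apply_norm]
    refine (hb y z).trans ?_
    have : ‖y‖ ≤ ‖x‖ + 1 := by
      have h3 : ‖y - x‖ < 1 := by simpa [dist_eq_norm] using hy
      have h4 := norm_add_le x (y - x)
      rw [add_sub_cancel] at h4
      linarith
    gcongr
  · exact ((integrable_const _).add (h1.norm.const_mul _)).const_mul _
  · refine ae_of_all _ fun z y _ => ?_
    unfold kk
    have h5 : HasFDerivAt (fun y : Euc d => ‖y - a • z‖ ^ 2)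
        (2 • (innerSL ℝ (y - a • z)).comp (ContinuousLinearMap.id ℝ (Euc d))) y :=
      ((hasFDerivAt_id y).sub_const (a • z)).norm_sq
    have h6 := ((h5.neg.mul_const (2 * s)⁻¹).exp)
    simp only [div_eq_mul_inv, Pi.neg_apply] at h6 ⊢
    refine h6.congr_fderiv ?_
    ext v
    simp only [innerSL_apply_apply, inner_smul_left, smul_apply,
      neg_apply, ContinuousLinearMap.comp_id, smul_eq_mul, nsmul_eq_mul,
      conj_trivial]
    field_simp
    ring

/-- The unnormalized posterior. -/
def Wm (d : ℕ) (p : Measure (Euc d)) (a s : ℝ) (x : Euc d) : Measure (Euc d) :=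
  p.withDensity fun z => ENNReal.ofReal (kk d a s x z)

/-- The posterior with abstract parameters. -/
def Qm (d : ℕ) (p : Measure (Euc d)) (a s : ℝ) (x : Euc d) : Measure (Euc d) :=
  (Wm d p a s x Set.univ)⁻¹ • Wm d p a s x

lemma Wm_univ (d : ℕ) (a s : ℝ) (hs : 0 < s) (p : Measure (Euc d)) [IsProbabilityMeasure p]
    (x : Euc d) : Wm d p a s x Set.univ = ENNReal.ofReal (∫ z, kk d a s x z ∂p) := by
  rw [Wm, withDensity_apply _ MeasurableSet.univ, Measure.restrict_univ,
    ofReal_integral_eq_lintegral_ofReal (kk_int d a s hs p x)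
      (ae_of_all _ fun z => (kk_pos d a s x z).le)]

lemma Qm_prob (d : ℕ) (a s : ℝ) (hs : 0 < s) (p : Measure (Euc d)) [IsProbabilityMeasure p]
    (x : Euc d) : IsProbabilityMeasure (Qm d p a s x) := by
  constructor
  have := Zpos d a s hs p x
  rw [Qm, Measure.smul_apply, smul_eq_mul, Wm_univ d a s hs p x]
  apply ENNReal.inv_mul_cancel
  · simpa using this
  · simp

lemma Qm_integrable (d : ℕ) (a s : ℝ) (hs : 0 < s) (p : Measure (Euc d)) [IsProbabilityMeasure p]
    (x : Euc d) {E : Type*} [NormedAddCommGroup E] {f : Euc d → E} (hf : Integrable f p) :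
    Integrable f (Qm d p a s x) := by
  have := Zpos d a s hs p x
  refine Integrable.smul_measure (hf.mono_measure ?_) ?_
  · calc Wm d p a s x ≤ p.withDensity 1 := by
          refine withDensity_mono (ae_of_all _ fun z => ?_)
          simpa using kk_le d a s hs x z
      _ = p := withDensity_one
  · rw [Wm_univ d a s hs p x]; simpa using this

lemma Qm_integral (d : ℕ) (a s : ℝ) (hs : 0 < s) (p : Measure (Euc d)) [IsProbabilityMeasure p]
    (x : Euc d) {E : Type*} [NormedAddCommGroup E] [NormedSpace ℝ E] (f : Euc d → E) :
    ∫ z, f z ∂(Qm d p a s x) = (∫ z, kk d a s x z ∂p)⁻¹ • ∫ z, kk d a s x z • f z ∂p := by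
  have hZ := Zpos d a s hs p x
  have hm := (kk_cont_right d a s x).measurable
  rw [Qm, integral_smul_measure, Wm_univ d a s hs p x, Wm,
    integral_withDensity_eq_integral_toReal_smul (by fun_prop) (by simp)]
  rw [ENNReal.toReal_inv, ENNReal.toReal_ofReal hZ.le]
  simp_rw [ENNReal.toReal_ofReal (kk_pos d a s x _).le]

lemma bias_var (d : ℕ) (q : Measure (Euc d)) [IsProbabilityMeasure q]
    (h1 : Integrable (fun z : Euc d => z) q) (h2 : Integrable (fun z : Euc d => ‖z‖ ^ 2) q)
    (a : ℝ) (x : Euc d) :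
    ∫ z, ‖x - a • z‖ ^ 2 ∂q = ‖x - a • ∫ z, z ∂q‖ ^ 2 + a ^ 2 * ∫ z, ‖z - ∫ z, z ∂q‖ ^ 2 ∂q := by
  set m := ∫ z, z ∂q with hm
  have hc : Integrable (fun z => z - m) q := h1.sub (integrable_const _)
  have hi : Integrable (fun z => ⟪x - a • m, z - m⟫) q := hc.const_inner _
  have hs : Integrable (fun z => ‖z - m‖ ^ 2) q := by
    have : (fun z : Euc d => ‖z - m‖ ^ 2) = fun z => ‖z‖ ^ 2 - 2 * ⟪m, z⟫ + ‖m‖ ^ 2 := by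
      ext z; rw [norm_sub_sq_real, real_inner_comm]
    rw [this]
    exact (h2.sub ((h1.const_inner m).const_mul 2)).add (integrable_const _)
  have h0 : ∫ z, ⟪x - a • m, z - m⟫ ∂q = 0 := by
    rw [integral_inner hc, integral_sub h1 (integrable_const _)]
    simp [hm]
  have he : ∀ z, ‖x - a • z‖ ^ 2 =
      ‖x - a • m‖ ^ 2 - 2 * a * ⟪x - a • m, z - m⟫ + a ^ 2 * ‖z - m‖ ^ 2 := by
    intro z
    have : x - a • z = (x - a • m) - a • (z - m) := by rw [smul_sub]; abel
    rw [this, norm_sub_sq_real, inner_smul_right, norm_smul, mul_pow, Real.norm_eq_abs, sq_abs]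
    ring
  rw [integral_congr_ae (ae_of_all _ he)]
  have hA : Integrable (fun z => ‖x - a • m‖ ^ 2 - 2 * a * ⟪x - a • m, z - m⟫) q :=
    (integrable_const _).sub (hi.const_mul _)
  rw [integral_add hA (hs.const_mul _),
    integral_sub (integrable_const _) (hi.const_mul _), integral_const_mul, integral_const_mul, h0]
  simp

/-- **Second moment of the score in terms of the posterior covariance**
(equation (2-norm of score) used in Lemma B.4): for every `t > 0`,
`E_{x ∼ p_t} ‖∇ ln p_t(x)‖² = d/(1-e^{-2t}) - (e^{-2t}/(1-e^{-2t})²) E_{x ∼ p_t}[Tr Σ_t(x)]`. -/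
theorem score_second_moment
    (d : ℕ) (hd : 1 ≤ d) (V : Euc d → ℝ) (hV : Measurable V)
    (p : Measure (Euc d)) (hprob : IsProbabilityMeasure p)
    (hp : p = ((gibbs d V) Set.univ)⁻¹ • gibbs d V)
    (hm2 : Integrable (fun x => ‖x‖ ^ 2) p)
    (t : ℝ) (ht : 0 < t) :
    (∫ x, ‖score d p t x‖ ^ 2 ∂(ouMarginal d p t)) =
      (d : ℝ) / (1 - exp (-2 * t)) -
        exp (-2 * t) / (1 - exp (-2 * t)) ^ 2 *
          ∫ x, postTrCov d p t x ∂(ouMarginal d p t) := by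
  have hs : 0 < 1 - exp (-2 * t) := by
    have : exp (-2 * t) < 1 := by rw [Real.exp_lt_one_iff]; linarith
    linarith
  have ha2 : exp (-2 * t) = exp (-t) ^ 2 := by rw [← Real.exp_nat_mul]; congr 1; push_cast; ring
  have hden : ∀ x, ouDensity d p t x = (2 * π * (1 - exp (-2 * t))) ^ (-(d : ℝ) / 2) *
      ∫ z, kk d (exp (-t)) (1 - exp (-2 * t)) x z ∂p := fun x => rfl
  have hpost : ∀ x, posterior d p t x = Qm d p (exp (-t)) (1 - exp (-2 * t)) x := fun x => rfl
  rw [ouMarginal_eq d p t hs, ha2]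
  rw [ha2] at hs hden hpost
  have hden0 : ∀ x, 0 < ouDensity d p t x := by
    intro x
    rw [hden]
    have := Zpos d (exp (-t)) _ hs p x
    positivity
  have ha : 0 < exp (-t) := Real.exp_pos _
  have hsc : ∀ x, score d p t x = gradient (fun y => Real.log (ouDensity d p t y)) x := fun x => rfl
  have htr : ∀ x, postTrCov d p t x =
      ∫ z, ‖z - ∫ z, z ∂(posterior d p t x)‖ ^ 2 ∂(posterior d p t x) := fun x => rfl
  generalize hs' : 1 - exp (-t) ^ 2 = s at *
  generalize ha' : exp (-t) = a at *
  generalize hρ' : ouDensity d p t = ρ at *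
  generalize hS' : score d p t = S at *
  generalize hT' : postTrCov d p t = T at *
  generalize hP' : posterior d p t = P at *
  obtain rfl : P = Qm d p a s := funext hpost
  obtain rfl : T = _ := funext htr
  clear hpost hs' ha' hρ' hS' hT' hP' htr ha2
  have h1 : Integrable (fun z : Euc d => z) p := by
    refine Integrable.mono' (g := fun z => 1 + ‖z‖ ^ 2) ((integrable_const _).add hm2)
      (by fun_prop) (ae_of_all _ fun z => ?_)
    nlinarith [sq_nonneg (‖z‖ - 1), norm_nonneg z]
  have hq := fun x => Qm_prob d a s hs p x
  have hq1 := fun x => Qm_integrable d a s hs p x h1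
  have hq2 := fun x => Qm_integrable d a s hs p x hm2
  set C : ℝ := (2 * π * s) ^ (-(d : ℝ) / 2) with hC
  have hC0 : 0 < C := by positivity
  -- the score formula
  have hscore : ∀ x, S x = (-(1 / s)) • (x - a • ∫ z, z ∂(Qm d p a s x)) := by
    intro x
    have hZ := Zpos d a s hs p x
    have g1 := ((Z_grad d a s hs p h1 x).const_mul C).log (by positivity)
    have g2 : ρ = fun y => C * ∫ z, kk d a s y z ∂p := funext hden
    rw [hsc, g2]
    refine HasGradientAt.gradient ?_
    rw [hasGradientAt_iff_hasFDerivAt]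
    refine g1.congr_fderiv ?_
    have g3 := Qm_integral d a s hs p x (fun z => (-(1 / s)) • (x - a • z))
    have g4 : Integrable (fun z : Euc d => a • z) (Qm d p a s x) := (hq1 x).smul a
    rw [integral_smul, integral_sub (integrable_const _) g4, integral_smul,
      integral_const] at g3
    simp only [probReal_univ, one_smul] at g3
    rw [g3]
    ext v
    simp only [smul_apply, innerSL_apply_apply, InnerProductSpace.toDual_apply_apply,
      inner_smul_left, smul_eq_mul, conj_trivial]
    field_simp
  -- F
  set F : Euc d → ℝ := fun x => ∫ z, ‖x - a • z‖ ^ 2 ∂(Qm d p a s x) with hF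
  have hbv : ∀ x, F x = s ^ 2 * ‖S x‖ ^ 2 +
      a ^ 2 * ∫ z, ‖z - ∫ z, z ∂(Qm d p a s x)‖ ^ 2 ∂(Qm d p a s x) := by
    intro x
    rw [hF, hscore x, norm_smul, mul_pow, Real.norm_eq_abs, sq_abs]
    simp only
    rw [bias_var d (Qm d p a s x) (hq1 x) (hq2 x) a x]
    field_simp
  have hρF : ∀ x, ρ x * F x = ∫ z, C * (‖x - a • z‖ ^ 2 * kk d a s x z) ∂p := by
    intro x
    have hZ := Zpos d a s hs p x
    rw [hden, hF, integral_const_mul]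
    simp only
    rw [Qm_integral d a s hs p x]
    simp only [smul_eq_mul]
    rw [mul_assoc, ← mul_assoc _ _ (∫ z, _ ∂p), mul_inv_cancel₀ hZ.ne', one_mul]
    simp_rw [mul_comm]
  have hkc := kk_cont d a s
  have hinner : ∀ z, ∫ x, C * (‖x - a • z‖ ^ 2 * kk d a s x z) = s * d := by
    intro z
    rw [integral_const_mul]
    unfold kk
    rw [integral_sub_right_eq_self (fun u : Euc d => ‖u‖ ^ 2 * exp (-‖u‖ ^ 2 / (2 * s))) (a • z),
      gauss2 d hd s hs, hC, mul_left_comm, ← Real.rpow_add (by positivity)]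
    have : -(d : ℝ) / 2 + (d : ℝ) / 2 = 0 := by ring
    rw [this]; simp
  have hJ : Integrable (fun q : Euc d × Euc d =>
      C * (‖q.1 - a • q.2‖ ^ 2 * kk d a s q.1 q.2)) (volume.prod p) := by
    rw [integrable_prod_iff' (Continuous.aestronglyMeasurable (by fun_prop))]
    constructor
    · refine ae_of_all _ fun z => ?_
      exact ((gauss2_int d hd s hs).comp_sub_right (a • z)).const_mul C
    · have : ∀ z, ∫ x, ‖C * (‖x - a • z‖ ^ 2 * kk d a s x z)‖ = s * d := by
        intro z
        rw [← hinner z]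
        congr 1; ext x
        have := kk_pos d a s x z
        rw [Real.norm_eq_abs, abs_of_nonneg (by positivity)]
      simp_rw [this]
      exact integrable_const _
  have hρFi : Integrable (fun x => ρ x * F x) := by
    simp_rw [hρF]; exact hJ.integral_prod_left
  have hρFv : ∫ x, ρ x * F x = s * d := by
    simp_rw [hρF]
    rw [← integral_prod _ hJ, integral_prod_symm _ hJ]
    simp only [hinner]
    simp
  have hZm : Measurable (fun x => ∫ z, kk d a s x z ∂p) :=
    (StronglyMeasurable.integral_prod_right (f := fun x z => kk d a s x z)
      hkc.stronglyMeasurable).measurable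
  have hρm : Measurable ρ := by
    rw [funext hden]; exact hZm.const_mul _
  have hmm : Measurable (fun x => ∫ z, z ∂(Qm d p a s x)) := by
    simp_rw [Qm_integral d a s hs p _ (fun z : Euc d => z)]
    refine hZm.inv.smul ?_
    exact (StronglyMeasurable.integral_prod_right (f := fun x z => kk d a s x z • z)
      (Continuous.stronglyMeasurable (by simp only [Function.uncurry_def]; fun_prop))).measurable
  have hSm : Measurable S := by
    rw [funext hscore]; fun_prop
  set μ := volume.withDensity (fun x => ENNReal.ofReal (ρ x)) with hμ
  have hFi : Integrable F μ := by
    rw [hμ, integrable_withDensity_iff_integrable_smul' (by fun_prop) (by simp)]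
    simpa only [ENNReal.toReal_ofReal (hden0 _).le, smul_eq_mul] using hρFi
  have hFv : ∫ x, F x ∂μ = s * d := by
    rw [hμ, integral_withDensity_eq_integral_toReal_smul (by fun_prop) (by simp)]
    simpa only [ENNReal.toReal_ofReal (hden0 _).le, smul_eq_mul] using hρFv
  have hTn : ∀ x, 0 ≤ ∫ z, ‖z - ∫ z, z ∂(Qm d p a s x)‖ ^ 2 ∂(Qm d p a s x) := fun x =>
    integral_nonneg fun z => by positivity
  have hSi : Integrable (fun x => ‖S x‖ ^ 2) μ := by
    refine Integrable.mono' (hFi.const_mul (1 / s ^ 2)) (by fun_prop) (ae_of_all _ fun x => ?_)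
    rw [Real.norm_eq_abs, abs_of_nonneg (by positivity), hbv x, mul_add, ← mul_assoc,
      one_div_mul_cancel (by positivity), one_mul]
    have := hTn x
    have : 0 ≤ 1 / s ^ 2 *
      (a ^ 2 * ∫ z, ‖z - ∫ z, z ∂(Qm d p a s x)‖ ^ 2 ∂(Qm d p a s x)) := by positivity
    linarith
  have hTe : ∀ x, ∫ z, ‖z - ∫ z, z ∂(Qm d p a s x)‖ ^ 2 ∂(Qm d p a s x) =
      1 / a ^ 2 * (F x - s ^ 2 * ‖S x‖ ^ 2) := by
    intro x
    rw [hbv x]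
    field_simp
    ring
  simp only [hTe]
  rw [integral_const_mul, integral_sub hFi (hSi.const_mul _), integral_const_mul, hFv]
  field_simp
  ring
end
end
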